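/- For every integer n ≥ 1 there exists a constant C = C(n) > 0, depending only on n, with the following property: for every R > 0, every measurable function r : Sⁿ → ℝ satisfying 0 < r(z) ≤ R for all z ∈ Sⁿ, every point Y ∈ ℝ^{n+1} with |Y| ≤ R, and every τ > 0, one has ∫_{Sⁿ} (4πτ)^{-n/2} exp(−|r(z)·z − Y|² / (4τ)) · r(z)^{n+1} dσ(z) ≤ C·R. -/

import Mathlib

open MeasureTheory Real

/-!
After rescaling by `√τ` the integrand is, up to the factor `r ≤ R`, at most
`t ^ n * exp (-|t z - w|² / 4)` with `t = r / √τ` and `w = Y / √τ`. Write `e` for the direction of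
`w`. Where `t ≥ 2 |w|` we have `|t z - w| ≥ t / 2`, so this is bounded. Where `t ≤ 2 |w|` we use
`|w| |z - e| ≤ 2 |t z - w|`, which no longer involves `t`, and are left with
`(2 |w|) ^ n * exp (-(|w| |z - e|)² / 16)`. The integral of the latter over the sphere is bounded
uniformly in `w`, because the cap of radius `s` about `e` has measure `O(s ^ n)`; this is seen in
the gnomonic chart, whose inverse is Lipschitz.
-/

open Metric Module Submodule
open NormedSpace (normalize norm_smul_normalize normalize_smul_of_pos
  normalize_eq_self_of_norm_eq_one norm_normalize_eq_one_iff)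
open scoped ENNReal NNReal RealInnerProductSpace

section RadialProjection

variable {E : Type*} [NormedAddCommGroup E] [NormedSpace ℝ E]

lemma norm_normalize_le_one (x : E) : ‖normalize x‖ ≤ 1 :=
  mem_closedBall_zero_iff.1 (inv_norm_smul_mem_unitClosedBall x)

lemma norm_mul_norm_normalize_sub_le (x y : E) :
    ‖y‖ * ‖normalize x - normalize y‖ ≤ 2 * ‖x - y‖ := by
  have decomposition :
      ‖y‖ • (normalize x - normalize y) = (‖y‖ - ‖x‖) • normalize x + (x - y) := by
    rw [smul_sub, sub_smul, norm_smul_normalize, norm_smul_normalize]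
    abel
  calc ‖y‖ * ‖normalize x - normalize y‖
      = ‖(‖y‖ - ‖x‖) • normalize x + (x - y)‖ := by rw [← decomposition, norm_smul, norm_norm]
    _ ≤ |‖y‖ - ‖x‖| * ‖normalize x‖ + ‖x - y‖ := by
        rw [← Real.norm_eq_abs, ← norm_smul]
        exact norm_add_le _ _
    _ ≤ ‖y - x‖ * 1 + ‖x - y‖ := by
        gcongr
        exacts [abs_norm_sub_norm_le y x, norm_normalize_le_one x]
    _ = 2 * ‖x - y‖ := by rw [norm_sub_rev y x]; ring

lemma lipschitzOnWith_normalize : LipschitzOnWith 2 (normalize : E → E) {x | 1 ≤ ‖x‖} := by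
  refine LipschitzOnWith.of_dist_le_mul fun x _ y hy ↦ ?_
  rw [dist_eq_norm, dist_eq_norm]
  calc ‖normalize x - normalize y‖
      ≤ ‖y‖ * ‖normalize x - normalize y‖ := le_mul_of_one_le_left (norm_nonneg _) hy
    _ ≤ 2 * ‖x - y‖ := norm_mul_norm_normalize_sub_le x y

end RadialProjection

section Gnomonic

variable {E : Type*} [NormedAddCommGroup E] [InnerProductSpace ℝ E]

/-- The inverse gnomonic chart of the unit sphere at `e`: the tangent hyperplane at `e`, modelled on
`(ℝ ∙ e)ᗮ`, is projected radially onto the sphere. -/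
noncomputable def gnomonicParam (e : E) (w : (ℝ ∙ e)ᗮ) : E :=
  normalize (e + w)

variable {e z : E}

lemma one_le_norm_add_orthogonal (he : ‖e‖ = 1) (w : (ℝ ∙ e)ᗮ) : 1 ≤ ‖e + w‖ := by
  have inner_eq_zero : ⟪e, w⟫ = 0 := mem_orthogonal_singleton_iff_inner_right.1 w.2
  have pythagoras := norm_add_sq_eq_norm_sq_add_norm_sq_of_inner_eq_zero _ _ inner_eq_zero
  rw [he] at pythagoras
  nlinarith [norm_nonneg (e + w), mul_self_nonneg ‖(w : E)‖]

lemma lipschitzWith_gnomonicParam (he : ‖e‖ = 1) : LipschitzWith 2 (gnomonicParam e) :=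
  LipschitzWith.of_dist_le_mul fun v w ↦ by
    simpa using! lipschitzOnWith_normalize.dist_le_mul _ (one_le_norm_add_orthogonal he v) _
      (one_le_norm_add_orthogonal he w)

lemma norm_sub_sq_of_norm_eq_one (hz : ‖z‖ = 1) (he : ‖e‖ = 1) :
    ‖z - e‖ ^ 2 = 2 * (1 - ⟪e, z⟫) := by
  rw [norm_sub_sq_real, hz, he, real_inner_comm]
  ring

lemma inv_inner_smul_sub_mem_orthogonal (he : ‖e‖ = 1) (hinner : ⟪e, z⟫ ≠ 0) :
    ⟪e, z⟫⁻¹ • z - e ∈ (ℝ ∙ e)ᗮ := by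
  rw [mem_orthogonal_singleton_iff_inner_right, inner_sub_right, inner_smul_right,
    real_inner_self_eq_norm_sq, he, inv_mul_cancel₀ hinner]
  norm_num

lemma norm_inv_inner_smul_sub_le (hz : ‖z‖ = 1) (he : ‖e‖ = 1) (hinner : 1 / 2 ≤ ⟪e, z⟫) :
    ‖⟪e, z⟫⁻¹ • z - e‖ ≤ 2 * ‖z - e‖ := by
  have chord := norm_sub_sq_of_norm_eq_one hz he
  set c := ⟪e, z⟫ with hc
  have hc0 : 0 < c := by linarith
  have norm_sq : ‖c⁻¹ • z - e‖ ^ 2 = (c ^ 2)⁻¹ - 1 := by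
    rw [norm_sub_sq_real, norm_smul, hz, he, real_inner_smul_left, real_inner_comm, ← hc,
      inv_mul_cancel₀ hc0.ne', Real.norm_eq_abs, abs_of_pos (inv_pos.2 hc0)]
    ring
  have hc1 : c ≤ 1 := by nlinarith [sq_nonneg ‖z - e‖]
  refine le_of_sq_le_sq ?_ (by positivity)
  rw [mul_pow, norm_sq, chord, sub_le_iff_le_add, inv_le_iff_one_le_mul₀ (by positivity)]
  nlinarith [mul_nonneg (sub_nonneg.2 hc1) (show 0 ≤ (c - 1 / 2) by linarith)]

lemma sphere_inter_closedBall_subset_image_gnomonicParam (he : ‖e‖ = 1) {s : ℝ} (hs : s ≤ 1) :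
    sphere 0 1 ∩ closedBall e s ⊆ gnomonicParam e '' closedBall 0 (2 * s) := by
  rintro z ⟨hz, hze⟩
  rw [mem_sphere_zero_iff_norm] at hz
  rw [mem_closedBall_iff_norm] at hze
  have hinner : 1 / 2 ≤ ⟪e, z⟫ := by
    nlinarith [norm_sub_sq_of_norm_eq_one hz he, norm_nonneg (z - e)]
  have hpos : 0 < ⟪e, z⟫ := by linarith
  refine ⟨⟨_, inv_inner_smul_sub_mem_orthogonal he hpos.ne'⟩, ?_, ?_⟩
  · rw [mem_closedBall_zero_iff, coe_norm]
    exact (norm_inv_inner_smul_sub_le hz he hinner).trans (by linarith)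
  · rw [gnomonicParam, add_sub_cancel, normalize_smul_of_pos (inv_pos.2 hpos),
      normalize_eq_self_of_norm_eq_one hz]

end Gnomonic

section SphereMeasure

lemma hausdorffMeasure_closedBall {n : ℕ} {V : Type*} [NormedAddCommGroup V]
    [InnerProductSpace ℝ V] [FiniteDimensional ℝ V] [MeasurableSpace V] [BorelSpace V]
    (hV : finrank ℝ V = n) (x : V) {s : ℝ} (hs : 0 ≤ s) :
    μH[(n : ℝ)] (closedBall x s) =
      ENNReal.ofReal s ^ n * μH[(n : ℝ)] (closedBall (0 : EuclideanSpace ℝ (Fin n)) 1) := by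
  let coords := ((stdOrthonormalBasis ℝ V).reindex (finCongr hV)).repr.toIsometryEquiv
  rw [← coords.hausdorffMeasure_image, coords.image_closedBall, Measure.addHaar_closedBall' _ _ hs,
    finrank_euclideanSpace_fin, ENNReal.ofReal_pow hs]

variable {n : ℕ} {E : Type*} [NormedAddCommGroup E] [InnerProductSpace ℝ E]
  [Fact (finrank ℝ E = n + 1)] [MeasurableSpace E] [BorelSpace E]

lemma hausdorffMeasure_sphere_inter_closedBall_le_of_le_one {e : E} (he : ‖e‖ = 1) {s : ℝ}
    (hs₀ : 0 ≤ s) (hs₁ : s ≤ 1) :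
    μH[(n : ℝ)] (sphere (0 : E) 1 ∩ closedBall e s) ≤
      4 ^ n * μH[(n : ℝ)] (closedBall (0 : EuclideanSpace ℝ (Fin n)) 1) * ENNReal.ofReal s ^ n := by
  have : FiniteDimensional ℝ E := .of_fact_finrank_eq_succ n
  have finrank_tangent : finrank ℝ (ℝ ∙ e)ᗮ = n :=
    finrank_orthogonal_span_singleton (norm_ne_zero_iff.1 (he.symm ▸ one_ne_zero))
  calc μH[(n : ℝ)] (sphere (0 : E) 1 ∩ closedBall e s)
      ≤ μH[(n : ℝ)] (gnomonicParam e '' closedBall 0 (2 * s)) :=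
        measure_mono (sphere_inter_closedBall_subset_image_gnomonicParam he hs₁)
    _ ≤ 2 ^ n * μH[(n : ℝ)] (closedBall (0 : (ℝ ∙ e)ᗮ) (2 * s)) := by
        simpa using (lipschitzWith_gnomonicParam he).hausdorffMeasure_image_le n.cast_nonneg
          (closedBall 0 (2 * s))
    _ = 4 ^ n * μH[(n : ℝ)] (closedBall (0 : EuclideanSpace ℝ (Fin n)) 1) *
          ENNReal.ofReal s ^ n := by
        rw [hausdorffMeasure_closedBall finrank_tangent 0 (by positivity),
          ENNReal.ofReal_mul zero_le_two, ENNReal.ofReal_ofNat, mul_pow,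
          show (4 : ℝ≥0∞) = 2 * 2 by norm_num, mul_pow]
        ring

lemma hausdorffMeasure_sphere_lt_top : μH[(n : ℝ)] (sphere (0 : E) 1) < ∞ := by
  have : FiniteDimensional ℝ E := .of_fact_finrank_eq_succ n
  refine (isCompact_sphere 0 1).measure_lt_top_of_nhdsWithin fun e he ↦
    ⟨_, inter_mem_nhdsWithin _ (closedBall_mem_nhds e one_pos), ?_⟩
  refine (hausdorffMeasure_sphere_inter_closedBall_le_of_le_one (mem_sphere_zero_iff_norm.1 he)
    zero_le_one le_rfl).trans_lt ?_
  have unitBall_lt_top : μH[(n : ℝ)] (closedBall (0 : EuclideanSpace ℝ (Fin n)) 1) < ∞ :=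
    measure_closedBall_lt_top
  finiteness

variable (n E) in
lemma exists_hausdorffMeasure_sphere_inter_closedBall_le :
    ∃ A : ℝ≥0, ∀ e : E, ‖e‖ = 1 → ∀ s : ℝ, 0 ≤ s →
      μH[(n : ℝ)] (sphere (0 : E) 1 ∩ closedBall e s) ≤ A * ENNReal.ofReal s ^ n := by
  set ω := μH[(n : ℝ)] (closedBall (0 : EuclideanSpace ℝ (Fin n)) 1)
  set σ := μH[(n : ℝ)] (sphere (0 : E) 1)
  have A_ne_top : 4 ^ n * ω + σ ≠ ∞ := by
    have : ω < ∞ := measure_closedBall_lt_top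
    have : σ < ∞ := hausdorffMeasure_sphere_lt_top
    finiteness
  refine ⟨(4 ^ n * ω + σ).toNNReal, fun e he s hs ↦ ?_⟩
  rw [ENNReal.coe_toNNReal A_ne_top]
  rcases le_total s 1 with hs₁ | hs₁
  · calc μH[(n : ℝ)] (sphere (0 : E) 1 ∩ closedBall e s)
        ≤ 4 ^ n * ω * ENNReal.ofReal s ^ n :=
          hausdorffMeasure_sphere_inter_closedBall_le_of_le_one he hs hs₁
      _ ≤ (4 ^ n * ω + σ) * ENNReal.ofReal s ^ n := by gcongr; exact le_self_add
  · calc μH[(n : ℝ)] (sphere (0 : E) 1 ∩ closedBall e s)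
        ≤ σ := measure_mono Set.inter_subset_left
      _ ≤ 4 ^ n * ω + σ := le_add_self
      _ ≤ (4 ^ n * ω + σ) * ENNReal.ofReal s ^ n :=
          le_mul_of_one_le_right' (one_le_pow₀ (ENNReal.one_le_ofReal.2 hs₁))

end SphereMeasure

section PolynomialGrowth

variable {X : Type*} [PseudoMetricSpace X]

lemma comp_mul_dist_le_tsum_indicator_closedBall {φ : ℝ → ℝ≥0∞} (hφ : AntitoneOn φ (Set.Ici 0))
    {l : ℝ} (hl : 0 < l) (x z : X) :
    φ (l * dist z x) ≤
      ∑' k : ℕ, (closedBall x ((k + 1) / l)).indicator (fun _ ↦ φ k) z := by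
  set k := ⌊l * dist z x⌋₊
  have mem_ball : z ∈ closedBall x ((k + 1) / l) := by
    rw [mem_closedBall, le_div_iff₀' hl]
    exact (Nat.lt_floor_add_one _).le
  calc φ (l * dist z x) ≤ φ k :=
        hφ (Set.mem_Ici.2 k.cast_nonneg) (Set.mem_Ici.2 (by positivity))
          (Nat.floor_le (by positivity))
    _ = (closedBall x ((k + 1) / l)).indicator (fun _ ↦ φ k) z :=
        (Set.indicator_of_mem mem_ball fun _ ↦ φ k).symm
    _ ≤ _ := ENNReal.le_tsum k

lemma pow_mul_lintegral_comp_mul_dist_le [MeasurableSpace X] [OpensMeasurableSpace X]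
    {μ : Measure X} {x : X} {n : ℕ} {A : ℝ≥0∞}
    (growth : ∀ s, 0 ≤ s → μ (closedBall x s) ≤ A * ENNReal.ofReal s ^ n)
    {φ : ℝ → ℝ≥0∞} (hφ : AntitoneOn φ (Set.Ici 0)) {l : ℝ} (hl : 0 < l) :
    ENNReal.ofReal l ^ n * ∫⁻ z, φ (l * dist z x) ∂μ ≤
      A * ∑' k : ℕ, (k + 1) ^ n * φ k := by
  have shell (k : ℕ) :
      ENNReal.ofReal l ^ n * μ (closedBall x ((k + 1) / l)) ≤ A * (k + 1) ^ n := by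
    calc ENNReal.ofReal l ^ n * μ (closedBall x ((k + 1) / l))
        ≤ ENNReal.ofReal l ^ n * (A * ENNReal.ofReal ((k + 1) / l) ^ n) := by
          gcongr
          exact growth _ (by positivity)
      _ = A * ENNReal.ofReal (l * ((k + 1) / l)) ^ n := by
          rw [ENNReal.ofReal_mul hl.le, mul_pow, mul_left_comm]
      _ = A * (k + 1) ^ n := by
          rw [mul_div_cancel₀ _ hl.ne']
          norm_cast
  calc ENNReal.ofReal l ^ n * ∫⁻ z, φ (l * dist z x) ∂μ
      ≤ ENNReal.ofReal l ^ n *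
          ∫⁻ z, ∑' k : ℕ, (closedBall x ((k + 1) / l)).indicator (fun _ ↦ φ k) z ∂μ := by
        gcongr with z
        exact comp_mul_dist_le_tsum_indicator_closedBall hφ hl x z
    _ = ∑' k : ℕ, ENNReal.ofReal l ^ n * (φ k * μ (closedBall x ((k + 1) / l))) := by
        rw [lintegral_tsum fun k ↦
          (measurable_const.indicator measurableSet_closedBall).aemeasurable, ENNReal.tsum_mul_left]
        simp only [lintegral_indicator_const measurableSet_closedBall]
    _ ≤ ∑' k : ℕ, A * ((k + 1) ^ n * φ k) := by
        refine ENNReal.tsum_le_tsum fun k ↦ ?_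
        rw [mul_left_comm, ← mul_assoc A, mul_comm _ (φ k)]
        exact mul_le_mul_right (shell k) (φ k)
    _ = A * ∑' k : ℕ, (k + 1) ^ n * φ k := ENNReal.tsum_mul_left

end PolynomialGrowth

section Gaussian

lemma summable_succ_pow_mul_exp_neg_mul_sq (n : ℕ) {a : ℝ} (ha : 0 < a) :
    Summable fun k : ℕ ↦ ((k : ℝ) + 1) ^ n * Real.exp (-a * k ^ 2) := by
  have shifted := ((summable_nat_add_iff 1).2
    (Real.summable_pow_mul_exp_neg_nat_mul n ha)).mul_left (Real.exp a)
  refine shifted.of_nonneg_of_le (fun k ↦ by positivity) fun k ↦ ?_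
  have le_sq : (k : ℝ) ≤ k ^ 2 := mod_cast Nat.le_self_pow two_ne_zero k
  calc ((k : ℝ) + 1) ^ n * Real.exp (-a * k ^ 2)
      ≤ ((k : ℝ) + 1) ^ n * Real.exp (a + -a * (k + 1)) := by
        gcongr
        nlinarith
    _ = Real.exp a * (((k + 1 : ℕ) : ℝ) ^ n * Real.exp (-a * (k + 1 : ℕ))) := by
        rw [Real.exp_add]
        push_cast
        ring

lemma tsum_succ_pow_mul_ofReal_exp_neg_mul_sq_ne_top (n : ℕ) {a : ℝ} (ha : 0 < a) :
    ∑' k : ℕ, ((k : ℝ≥0∞) + 1) ^ n * ENNReal.ofReal (Real.exp (-a * k ^ 2)) ≠ ∞ := by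
  convert (summable_succ_pow_mul_exp_neg_mul_sq n ha).tsum_ofReal_ne_top using 3 with k
  rw [ENNReal.ofReal_mul (by positivity), ENNReal.ofReal_pow (by positivity)]
  norm_cast

lemma antitoneOn_ofReal_exp_neg_mul_sq {a : ℝ} (ha : 0 ≤ a) :
    AntitoneOn (fun t : ℝ ↦ ENNReal.ofReal (Real.exp (-a * t ^ 2))) (Set.Ici 0) := by
  intro s hs t _ hst
  rw [Set.mem_Ici] at hs
  refine ENNReal.ofReal_le_ofReal (Real.exp_le_exp.2 ?_)
  simp only [neg_mul]
  gcongr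

lemma pow_mul_exp_neg_mul_sq_le (n : ℕ) {a t : ℝ} (ha : 0 < a) (ht : 0 ≤ t) :
    t ^ n * Real.exp (-a * t ^ 2) ≤ n.factorial * Real.exp (1 / (4 * a)) := by
  have pow_le : t ^ n ≤ n.factorial * Real.exp t := by
    rw [← div_le_iff₀' (by positivity)]
    exact Real.pow_div_factorial_le_exp t ht n
  have complete_square : t + -a * t ^ 2 ≤ 1 / (4 * a) := by
    rw [le_div_iff₀ (by positivity)]
    nlinarith [sq_nonneg (2 * a * t - 1)]
  calc t ^ n * Real.exp (-a * t ^ 2)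
      ≤ n.factorial * Real.exp t * Real.exp (-a * t ^ 2) := by gcongr
    _ = n.factorial * Real.exp (t + -a * t ^ 2) := by rw [Real.exp_add, mul_assoc]
    _ ≤ n.factorial * Real.exp (1 / (4 * a)) := by gcongr

end Gaussian

section UnitTime

variable {E : Type*} [NormedAddCommGroup E]

lemma pow_mul_exp_neg_norm_smul_sub_sq_le [NormedSpace ℝ E] (n : ℕ) {t : ℝ} (ht : 0 < t) {z : E}
    (hz : ‖z‖ = 1) (w : E) :
    t ^ n * Real.exp (-(1 / 4) * ‖t • z - w‖ ^ 2) ≤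
      n.factorial * Real.exp 4 +
        2 ^ n * (‖w‖ ^ n * Real.exp (-(1 / 16) * (‖w‖ * dist z (normalize w)) ^ 2)) := by
  have norm_smul_z : ‖t • z‖ = t := by rw [norm_smul, hz, mul_one, Real.norm_of_nonneg ht.le]
  rcases le_total (2 * ‖w‖) t with far | near
  · have half_le : t / 2 ≤ ‖t • z - w‖ := by
      linarith [norm_sub_norm_le (t • z) w]
    calc t ^ n * Real.exp (-(1 / 4) * ‖t • z - w‖ ^ 2)
        ≤ t ^ n * Real.exp (-(1 / 16) * t ^ 2) := by
          gcongr t ^ n * Real.exp ?_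
          nlinarith
      _ ≤ n.factorial * Real.exp 4 := by
          convert pow_mul_exp_neg_mul_sq_le n (a := 1 / 16) (by norm_num) ht.le using 3
          norm_num
      _ ≤ _ := le_add_of_nonneg_right (by positivity)
  · have chord_le : ‖w‖ * dist z (normalize w) ≤ 2 * ‖t • z - w‖ := by
      simpa only [normalize_smul_of_pos ht, normalize_eq_self_of_norm_eq_one hz, dist_eq_norm]
        using norm_mul_norm_normalize_sub_le (t • z) w
    have chord_nonneg : 0 ≤ ‖w‖ * dist z (normalize w) := by positivity
    calc t ^ n * Real.exp (-(1 / 4) * ‖t • z - w‖ ^ 2)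
        ≤ (2 * ‖w‖) ^ n * Real.exp (-(1 / 16) * (‖w‖ * dist z (normalize w)) ^ 2) := by
          gcongr ?_ ^ n * Real.exp ?_
          nlinarith
      _ = 2 ^ n * (‖w‖ ^ n * Real.exp (-(1 / 16) * (‖w‖ * dist z (normalize w)) ^ 2)) := by
          rw [mul_pow, mul_assoc]
      _ ≤ _ := le_add_of_nonneg_left (by positivity)

variable [InnerProductSpace ℝ E] [MeasurableSpace E] [BorelSpace E]

variable (E) in
lemma exists_pow_mul_setLIntegral_sphere_exp_neg_mul_sq_le (n : ℕ) [Fact (finrank ℝ E = n + 1)]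
    {a : ℝ} (ha : 0 < a) :
    ∃ C : ℝ≥0, ∀ w : E, ENNReal.ofReal ‖w‖ ^ n * ∫⁻ z in sphere 0 1,
      ENNReal.ofReal (Real.exp (-a * (‖w‖ * dist z (normalize w)) ^ 2)) ∂μH[(n : ℝ)] ≤ C := by
  obtain ⟨A, growth⟩ := exists_hausdorffMeasure_sphere_inter_closedBall_le n E
  set S := ∑' k : ℕ, ((k : ℝ≥0∞) + 1) ^ n * ENNReal.ofReal (Real.exp (-a * k ^ 2))
  set σ := μH[(n : ℝ)] (sphere (0 : E) 1)
  have C_ne_top : A * S + σ ≠ ∞ := by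
    have : S ≠ ∞ := tsum_succ_pow_mul_ofReal_exp_neg_mul_sq_ne_top n ha
    have : σ < ∞ := hausdorffMeasure_sphere_lt_top
    finiteness
  refine ⟨(A * S + σ).toNNReal, fun w ↦ ?_⟩
  rw [ENNReal.coe_toNNReal C_ne_top]
  rcases eq_or_ne w 0 with rfl | hw
  · calc _ = 0 ^ n * σ := by simp [σ]
      _ ≤ 1 * σ := by gcongr; exact pow_le_one₀ le_rfl zero_le_one
      _ ≤ A * S + σ := by rw [one_mul]; exact le_add_self
  · have growth_restrict (s : ℝ) (hs : 0 ≤ s) : (μH[(n : ℝ)].restrict (sphere (0 : E) 1))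
        (closedBall (normalize w) s) ≤ A * ENNReal.ofReal s ^ n := by
      rw [Measure.restrict_apply measurableSet_closedBall, Set.inter_comm]
      exact growth _ (norm_normalize_eq_one_iff.2 hw) s hs
    calc _ ≤ A * S := pow_mul_lintegral_comp_mul_dist_le growth_restrict
          (antitoneOn_ofReal_exp_neg_mul_sq ha.le) (norm_pos_iff.2 hw)
      _ ≤ A * S + σ := le_self_add

variable (E) in
lemma exists_setLIntegral_sphere_pow_mul_exp_neg_norm_smul_sub_sq_le (n : ℕ)
    [Fact (finrank ℝ E = n + 1)] :
    ∃ C : ℝ≥0, ∀ t : E → ℝ, (∀ z ∈ sphere (0 : E) 1, 0 < t z) → ∀ w : E,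
      ∫⁻ z in sphere 0 1, ENNReal.ofReal (t z ^ n * Real.exp (-(1 / 4) * ‖t z • z - w‖ ^ 2))
        ∂μH[(n : ℝ)] ≤ C := by
  obtain ⟨C, hC⟩ := exists_pow_mul_setLIntegral_sphere_exp_neg_mul_sq_le E n
    (a := 1 / 16) (by norm_num)
  set M : ℝ := n.factorial * Real.exp 4
  set σ := μH[(n : ℝ)] (sphere (0 : E) 1)
  have bound_ne_top : ENNReal.ofReal M * σ + 2 ^ n * C ≠ ∞ := by
    have : σ < ∞ := hausdorffMeasure_sphere_lt_top
    finiteness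
  refine ⟨(ENNReal.ofReal M * σ + 2 ^ n * C).toNNReal, fun t ht w ↦ ?_⟩
  rw [ENNReal.coe_toNNReal bound_ne_top]
  let φ (z : E) := ENNReal.ofReal (Real.exp (-(1 / 16) * (‖w‖ * dist z (normalize w)) ^ 2))
  calc _ ≤ ∫⁻ z in sphere 0 1, (ENNReal.ofReal M + 2 ^ n * (ENNReal.ofReal ‖w‖ ^ n * φ z))
        ∂μH[(n : ℝ)] := by
        refine setLIntegral_mono' isClosed_sphere.measurableSet fun z hz ↦ ?_
        refine (ENNReal.ofReal_le_ofReal (pow_mul_exp_neg_norm_smul_sub_sq_le n (ht z hz)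
          (mem_sphere_zero_iff_norm.1 hz) w)).trans_eq ?_
        rw [ENNReal.ofReal_add (by positivity) (by positivity),
          ENNReal.ofReal_mul (by positivity : (0 : ℝ) ≤ 2 ^ n),
          ENNReal.ofReal_mul (by positivity : 0 ≤ ‖w‖ ^ n), ENNReal.ofReal_pow zero_le_two,
          ENNReal.ofReal_pow (norm_nonneg w), ENNReal.ofReal_ofNat]
    _ = ENNReal.ofReal M * σ + 2 ^ n * (ENNReal.ofReal ‖w‖ ^ n *
          ∫⁻ z in sphere 0 1, φ z ∂μH[(n : ℝ)]) := by
        rw [lintegral_add_left measurable_const, setLIntegral_const,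
          lintegral_const_mul' _ _ (by finiteness), lintegral_const_mul' _ _ (by finiteness)]
    _ ≤ ENNReal.ofReal M * σ + 2 ^ n * C := by
        gcongr
        exact hC w

end UnitTime

section HeatWeight

/-- The weight `(4πτ)^(-n/2) exp(-|v|²/(4τ))` of the `n`-dimensional backward heat kernel at time
`τ` before the singular time. The exponent `n` is the dimension of the hypersurface over which the
weight is integrated, so it is independent of the ambient space `E`. -/
noncomputable def heatWeight {E : Type*} [Norm E] (n : ℕ) (τ : ℝ) (v : E) : ℝ :=
  (4 * π * τ) ^ (-(n : ℝ) / 2) * Real.exp (-‖v‖ ^ 2 / (4 * τ))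

lemma heatWeight_nonneg {E : Type*} [Norm E] (n : ℕ) {τ : ℝ} (hτ : 0 ≤ τ) (v : E) :
    0 ≤ heatWeight n τ v := by
  unfold heatWeight
  positivity

lemma four_pi_mul_rpow_neg_le (n : ℕ) {τ : ℝ} (hτ : 0 < τ) :
    (4 * π * τ) ^ (-(n : ℝ) / 2) ≤ ((√τ) ^ n)⁻¹ := by
  calc (4 * π * τ) ^ (-(n : ℝ) / 2) ≤ τ ^ (-(n : ℝ) / 2) :=
        Real.rpow_le_rpow_of_nonpos hτ (by nlinarith [Real.pi_gt_three])
          (div_nonpos_of_nonpos_of_nonneg (neg_nonpos.2 n.cast_nonneg) zero_le_two)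
    _ = ((√τ) ^ n)⁻¹ := by
        rw [← Real.rpow_natCast, ← Real.rpow_neg (by positivity), Real.sqrt_eq_rpow,
          ← Real.rpow_mul hτ.le]
        ring_nf

lemma heatWeight_mul_pow_le {E : Type*} [NormedAddCommGroup E] [NormedSpace ℝ E] (n : ℕ) {τ r : ℝ}
    (hτ : 0 < τ) (hr : 0 ≤ r) (v : E) :
    heatWeight n τ v * r ^ n ≤ (r / √τ) ^ n * Real.exp (-(1 / 4) * ‖(√τ)⁻¹ • v‖ ^ 2) := by
  have exponent_eq : -‖v‖ ^ 2 / (4 * τ) = -(1 / 4) * ‖(√τ)⁻¹ • v‖ ^ 2 := by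
    rw [norm_smul, mul_pow, norm_inv, Real.norm_of_nonneg (sqrt_nonneg τ), inv_pow,
      Real.sq_sqrt hτ.le]
    field_simp
  calc heatWeight n τ v * r ^ n
      ≤ ((√τ) ^ n)⁻¹ * Real.exp (-(1 / 4) * ‖(√τ)⁻¹ • v‖ ^ 2) * r ^ n := by
        rw [heatWeight, exponent_eq]
        gcongr
        exact four_pi_mul_rpow_neg_le n hτ
    _ = (r / √τ) ^ n * Real.exp (-(1 / 4) * ‖(√τ)⁻¹ • v‖ ^ 2) := by
        rw [div_pow]
        ring

variable (E : Type*) [NormedAddCommGroup E] [InnerProductSpace ℝ E] [MeasurableSpace E]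
  [BorelSpace E]

lemma exists_setLIntegral_sphere_heatWeight_mul_pow_le (n : ℕ) [Fact (finrank ℝ E = n + 1)] :
    ∃ C : ℝ≥0, ∀ r : E → ℝ, (∀ z ∈ sphere (0 : E) 1, 0 < r z) → ∀ (Y : E) (τ : ℝ), 0 < τ →
      ∫⁻ z in sphere 0 1, ENNReal.ofReal (heatWeight n τ (r z • z - Y) * r z ^ n)
        ∂μH[(n : ℝ)] ≤ C := by
  obtain ⟨C, hC⟩ := exists_setLIntegral_sphere_pow_mul_exp_neg_norm_smul_sub_sq_le E n
  refine ⟨C, fun r hr Y τ hτ ↦ ?_⟩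
  have sqrt_pos : 0 < √τ := Real.sqrt_pos.2 hτ
  refine le_trans (setLIntegral_mono' isClosed_sphere.measurableSet fun z hz ↦ ?_)
    (hC (fun z ↦ r z / √τ) (fun z hz ↦ div_pos (hr z hz) sqrt_pos) ((√τ)⁻¹ • Y))
  have rescale : (r z / √τ) • z - (√τ)⁻¹ • Y = (√τ)⁻¹ • (r z • z - Y) := by
    rw [smul_sub, smul_smul, div_eq_inv_mul]
  rw [rescale]
  exact ENNReal.ofReal_le_ofReal (heatWeight_mul_pow_le n hτ (hr z hz).le _)

lemma exists_setLIntegral_sphere_heatWeight_mul_pow_succ_le (n : ℕ)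
    [Fact (finrank ℝ E = n + 1)] :
    ∃ C : ℝ≥0, ∀ (R : ℝ) (r : E → ℝ), (∀ z ∈ sphere (0 : E) 1, 0 < r z ∧ r z ≤ R) →
      ∀ (Y : E) (τ : ℝ), 0 < τ →
      ∫⁻ z in sphere 0 1, ENNReal.ofReal (heatWeight n τ (r z • z - Y) * r z ^ (n + 1))
        ∂μH[(n : ℝ)] ≤ ENNReal.ofReal (C * R) := by
  obtain ⟨C, hC⟩ := exists_setLIntegral_sphere_heatWeight_mul_pow_le E n
  refine ⟨C, fun R r hr Y τ hτ ↦ ?_⟩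
  calc _ ≤ ∫⁻ z in sphere 0 1, ENNReal.ofReal (heatWeight n τ (r z • z - Y) * r z ^ n) *
        ENNReal.ofReal R ∂μH[(n : ℝ)] := by
        refine setLIntegral_mono' isClosed_sphere.measurableSet fun z hz ↦ ?_
        obtain ⟨r_pos, r_le⟩ := hr z hz
        have weight_nonneg := heatWeight_nonneg n hτ.le (r z • z - Y)
        rw [← ENNReal.ofReal_mul (by positivity), pow_succ, ← mul_assoc]
        gcongr
    _ ≤ C * ENNReal.ofReal R := by
        rw [lintegral_mul_const' _ _ ENNReal.ofReal_ne_top]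
        gcongr
        exact hC r (fun z hz ↦ (hr z hz).1) Y τ hτ
    _ = ENNReal.ofReal (C * R) := by
        rw [ENNReal.ofReal_mul C.coe_nonneg, ENNReal.ofReal_coe_nnreal]

end HeatWeight

lemma integrable_and_integral_le_of_lintegral_ofReal_le {X : Type*} [MeasurableSpace X]
    {μ : Measure X} {f : X → ℝ} {c : ℝ} (hf : AEStronglyMeasurable f μ) (hf₀ : 0 ≤ᵐ[μ] f)
    (hc : 0 ≤ c) (h : ∫⁻ x, ENNReal.ofReal (f x) ∂μ ≤ ENNReal.ofReal c) :
    Integrable f μ ∧ ∫ x, f x ∂μ ≤ c := by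
  refine ⟨⟨hf, (hasFiniteIntegral_iff_ofReal hf₀).2 (h.trans_lt ENNReal.ofReal_lt_top)⟩, ?_⟩
  rw [integral_eq_lintegral_of_nonneg_ae hf₀ hf]
  exact ENNReal.toReal_le_of_le_ofReal hc h

theorem stmt_0_general (E : Type*) [NormedAddCommGroup E] [InnerProductSpace ℝ E]
    [MeasurableSpace E] [BorelSpace E] (n : ℕ) [Fact (finrank ℝ E = n + 1)] :
    ∃ C : ℝ, 0 < C ∧ ∀ R : ℝ, 0 ≤ R → ∀ r : E → ℝ, Measurable r →
      (∀ z ∈ sphere (0 : E) 1, 0 < r z ∧ r z ≤ R) → ∀ (Y : E) (τ : ℝ), 0 < τ →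
      IntegrableOn (fun z ↦ heatWeight n τ (r z • z - Y) * r z ^ (n + 1)) (sphere 0 1)
          μH[(n : ℝ)] ∧
        ∫ z in sphere 0 1, heatWeight n τ (r z • z - Y) * r z ^ (n + 1) ∂μH[(n : ℝ)] ≤ C * R := by
  have : FiniteDimensional ℝ E := .of_fact_finrank_eq_succ n
  obtain ⟨C, hC⟩ := exists_setLIntegral_sphere_heatWeight_mul_pow_succ_le E n
  refine ⟨C + 1, by positivity, fun R hR r hr hrR Y τ hτ ↦ ?_⟩
  refine integrable_and_integral_le_of_lintegral_ofReal_le ?_ ?_ (by positivity) ?_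
  · unfold heatWeight
    fun_prop
  · refine ae_restrict_of_forall_mem isClosed_sphere.measurableSet fun z hz ↦ ?_
    exact mul_nonneg (heatWeight_nonneg n hτ.le _) (pow_nonneg (hrR z hz).1.le _)
  · refine (hC R r hrR Y τ hτ).trans (ENNReal.ofReal_le_ofReal ?_)
    gcongr
    exact le_add_of_nonneg_right zero_le_one

/-- For every integer `n ≥ 1` there exists a constant `C = C(n) > 0` such that for all `R > 0`,
all measurable radial functions `r` with `0 < r(z) ≤ R` on the unit sphere `Sⁿ ⊆ ℝ^{n+1}`,
all `Y` with `|Y| ≤ R` and all `τ > 0`, the Gaussian-weighted integral over the sphere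
is bounded by `C · R`. -/
theorem stmt_0 (n : ℕ) (hn : 1 ≤ n) :
    ∃ C : ℝ, 0 < C ∧
      ∀ (R : ℝ), 0 < R →
      ∀ r : EuclideanSpace ℝ (Fin (n + 1)) → ℝ, Measurable r →
      (∀ z ∈ Metric.sphere (0 : EuclideanSpace ℝ (Fin (n + 1))) 1, 0 < r z ∧ r z ≤ R) →
      ∀ Y : EuclideanSpace ℝ (Fin (n + 1)), ‖Y‖ ≤ R →
      ∀ τ : ℝ, 0 < τ →
      ∫ z in Metric.sphere (0 : EuclideanSpace ℝ (Fin (n + 1))) 1,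
          (4 * π * τ) ^ (-(n : ℝ) / 2) * Real.exp (-‖r z • z - Y‖ ^ 2 / (4 * τ)) *
            r z ^ (n + 1) ∂(μH[(n : ℝ)]) ≤ C * R := by
  have : Fact (finrank ℝ (EuclideanSpace ℝ (Fin (n + 1))) = n + 1) := ⟨finrank_euclideanSpace_fin⟩
  obtain ⟨C, hC, bound⟩ := stmt_0_general (EuclideanSpace ℝ (Fin (n + 1))) n
  exact ⟨C, hC, fun R hR r hr hrR Y _ τ hτ ↦ (bound R hR.le r hr hrR Y τ hτ).2⟩
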